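/- arXiv:1604.05307 — 3 statements merged into one kernel-verified Lean document; each statement's English description precedes it below -/
import Mathlib

section
/- Let f be a generalized sparse additive model whose components are three times continuously differentiable, and suppose all third-order partial derivatives of every univariate component are bounded in absolute value by B₃ on [-(1+r),(1+r)] and of every bivariate component by B₃ on [-(1+r),(1+r)]², for some r > 0 and B₃ ≥ 0. Let m ≥ 1 and let v ∈ ℝ^d satisfy |v_q| ≤ 1/√m for all q. Then for every ζ ∈ [-(1+r),(1+r)]^d, the third directional derivative of f at ζ along v satisfies |Σ_{i,j,k=1}^d ∂_i∂_j∂_k f(ζ) v_i v_j v_k| ≤ (4ρ_m + 1) K B₃ / m^{3/2}. -/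
/-!
The third directional derivative is additive on `C³` functions, so it can be bounded component by
component.  A univariate component depending on `x p` contributes only the term
`iteratedDeriv 3 φ (ζ p) * v p ^ 3`, hence at most `B₃ / m ^ (3 / 2)` (`abs_D3_uni_le`);
a bivariate component contributes `2 ^ 3 = 8` mixed partials, hence at most `8 * B₃ / m ^ (3 / 2)` (`abs_D3_biv_le`).
The total is at most `|S₁| + 8 * |S₂| + |var(S₂)|` times `B₃ / m ^ (3 / 2)`, and the handshake
inequality `2 * |S₂| ≤ ρ * |var(S₂)|` (`two_mul_card_le`) turns this into `(4 * ρ + 1) * K`.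
-/

open Finset

/-- Partial derivative of `g : ℝ^d → ℝ` with respect to coordinate `i`, at `x`. -/
noncomputable def pdv {d : ℕ} (i : Fin d) (g : (Fin d → ℝ) → ℝ) (x : Fin d → ℝ) : ℝ :=
  deriv (fun t => g (Function.update x i t)) (x i)

/-- The set of variables appearing in some pair of `S₂`. -/
def varsS {d : ℕ} (S₂ : Finset (Fin d × Fin d)) : Finset (Fin d) :=
  S₂.image Prod.fst ∪ S₂.image Prod.snd

/-- The degree of a variable `l`: the number of pairs of `S₂` containing `l`. -/
def degS {d : ℕ} (S₂ : Finset (Fin d × Fin d)) (l : Fin d) : ℕ :=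
  (S₂.filter (fun e => e.1 = l ∨ e.2 = l)).card

/-- Partial derivative of a bivariate function with respect to the first
(`false`) or second (`true`) argument. -/
noncomputable def bpd : Bool → (ℝ → ℝ → ℝ) → (ℝ → ℝ → ℝ)
  | false, φ => fun a b => deriv (fun s => φ s b) a
  | true, φ => fun a b => deriv (fun t => φ a t) b

/-- The third directional derivative of `g` at `ζ` along `v`, in coordinates. -/
noncomputable def D3 {d : ℕ} (v ζ : Fin d → ℝ) (g : (Fin d → ℝ) → ℝ) : ℝ :=
  ∑ i : Fin d, ∑ j : Fin d, ∑ k : Fin d, pdv i (pdv j (pdv k g)) ζ * v i * v j * v k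

lemma pdv_eq_fderiv {d : ℕ} (i : Fin d) {g : (Fin d → ℝ) → ℝ} (hg : Differentiable ℝ g) :
    pdv i g = fun x => fderiv ℝ g x (Pi.single i 1) := by
  funext x
  have h1 : HasFDerivAt g (fderiv ℝ g x) (Function.update x i (x i)) := by
    rw [Function.update_eq_self]
    exact (hg x).hasFDerivAt
  exact (h1.comp_hasDerivAt (x i) (hasDerivAt_update x i (x i))).deriv

lemma contDiff_pdv {d : ℕ} (i : Fin d) {g : (Fin d → ℝ) → ℝ} {n : ℕ}
    (hg : ContDiff ℝ (n + 1 : ℕ) g) : ContDiff ℝ n (pdv i g) := by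
  rw [pdv_eq_fderiv i (hg.differentiable (by simp))]
  exact (hg.fderiv_right (m := n) (by simp)).clm_apply contDiff_const

lemma pdv_add {d : ℕ} (i : Fin d) {g h : (Fin d → ℝ) → ℝ} {n : ℕ}
    (hg : ContDiff ℝ (n + 1 : ℕ) g) (hh : ContDiff ℝ (n + 1 : ℕ) h) :
    pdv i (g + h) = pdv i g + pdv i h := by
  have dg : Differentiable ℝ g := hg.differentiable (by simp)
  have dh : Differentiable ℝ h := hh.differentiable (by simp)
  rw [pdv_eq_fderiv i dg, pdv_eq_fderiv i dh, pdv_eq_fderiv i (dg.add dh)]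
  funext x
  rw [fderiv_add (dg x) (dh x)]
  rfl

lemma pdv_const {d : ℕ} (i : Fin d) (c : ℝ) :
    pdv i (fun _ : Fin d → ℝ => c) = 0 := by
  funext x
  simp [pdv]

lemma pdv_zero {d : ℕ} (i : Fin d) : pdv i (0 : (Fin d → ℝ) → ℝ) = 0 :=
  pdv_const i 0

lemma D3_add {d : ℕ} (v ζ : Fin d → ℝ) {g h : (Fin d → ℝ) → ℝ}
    (hg : ContDiff ℝ 3 g) (hh : ContDiff ℝ 3 h) :
    D3 v ζ (g + h) = D3 v ζ g + D3 v ζ h := by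
  have hg3 : ContDiff ℝ ((2 + 1 : ℕ)) g := by exact_mod_cast hg
  have hh3 : ContDiff ℝ ((2 + 1 : ℕ)) h := by exact_mod_cast hh
  simp only [D3, ← Finset.sum_add_distrib]
  refine Finset.sum_congr rfl fun i _ => Finset.sum_congr rfl fun j _ =>
    Finset.sum_congr rfl fun k _ => ?_
  have hg2 : ContDiff ℝ ((1 + 1 : ℕ)) (pdv k g) := contDiff_pdv k hg3
  have hh2 : ContDiff ℝ ((1 + 1 : ℕ)) (pdv k h) := contDiff_pdv k hh3
  have hg1 : ContDiff ℝ ((0 + 1 : ℕ)) (pdv j (pdv k g)) := contDiff_pdv j hg2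
  have hh1 : ContDiff ℝ ((0 + 1 : ℕ)) (pdv j (pdv k h)) := contDiff_pdv j hh2
  rw [pdv_add k hg3 hh3, pdv_add j hg2 hh2, pdv_add i hg1 hh1, Pi.add_apply]
  ring

lemma D3_const {d : ℕ} (v ζ : Fin d → ℝ) (c : ℝ) : D3 v ζ (fun _ => c) = 0 := by
  simp [D3, pdv_const, pdv_zero]

lemma abs_D3_sum_le {d : ℕ} (v ζ : Fin d → ℝ) {ι : Type*} (S : Finset ι)
    (F : ι → (Fin d → ℝ) → ℝ) (B : ℝ) (hF : ∀ e ∈ S, ContDiff ℝ 3 (F e))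
    (hB : ∀ e ∈ S, |D3 v ζ (F e)| ≤ B) :
    |D3 v ζ (fun x => ∑ e ∈ S, F e x)| ≤ S.card * B := by
  classical
  induction S using Finset.induction_on with
  | empty => simp [D3_const]
  | insert a S ha ih =>
    have hS : ∀ e ∈ S, ContDiff ℝ 3 (F e) := fun e he => hF e (mem_insert_of_mem he)
    have h : (fun x => ∑ e ∈ insert a S, F e x) = F a + fun x => ∑ e ∈ S, F e x := by
      funext x
      simp [Finset.sum_insert ha]
    rw [h, D3_add v ζ (hF a (mem_insert_self a S)) (ContDiff.sum hS), card_insert_of_notMem ha]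
    have h1 := ih hS fun e he => hB e (mem_insert_of_mem he)
    have h2 := hB a (mem_insert_self a S)
    push_cast
    linarith [abs_add_le (D3 v ζ (F a)) (D3 v ζ (fun x => ∑ e ∈ S, F e x))]

/-- The partial derivatives of a function of the single coordinate `p`; with the junk value of
`deriv` this needs no differentiability. -/
lemma pdv_uni {d : ℕ} (p k : Fin d) (φ : ℝ → ℝ) :
    pdv k (fun x : Fin d → ℝ => φ (x p)) =
      if k = p then fun x => deriv φ (x p) else (0 : (Fin d → ℝ) → ℝ) := by
  funext x
  by_cases h : k = p
  · subst h
    simp [pdv]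
  · simp [pdv, h, Function.update_of_ne (Ne.symm h)]

/-- The coordinate of the pair `e` selected by a Boolean, in the convention of `bpd`. -/
def sel {d : ℕ} (e : Fin d × Fin d) : Bool → Fin d
  | false => e.1
  | true => e.2

lemma pdv_biv {d : ℕ} (e : Fin d × Fin d) (he : e.1 ≠ e.2) (k : Fin d) (φ : ℝ → ℝ → ℝ) :
    pdv k (fun x : Fin d → ℝ => φ (x e.1) (x e.2)) =
      if k = e.1 then fun x => bpd false φ (x e.1) (x e.2)
      else if k = e.2 then fun x => bpd true φ (x e.1) (x e.2) else (0 : (Fin d → ℝ) → ℝ) := by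
  funext x
  by_cases h : k = e.1
  · subst h
    simp [pdv, bpd, Function.update_of_ne he.symm]
  · by_cases h' : k = e.2
    · subst h'
      simp [pdv, bpd, Function.update_of_ne he, h]
    · simp [pdv, h, h', Function.update_of_ne (Ne.symm h), Function.update_of_ne (Ne.symm h')]

/-- Contracting one derivative slot of a bivariate component.  The functional `T` stands for the
other derivatives followed by evaluation, so the lemma can be applied to the slots in turn. -/
lemma sum_pdv_biv {d : ℕ} (v : Fin d → ℝ) (e : Fin d × Fin d) (he : e.1 ≠ e.2)
    (φ : ℝ → ℝ → ℝ) (T : ((Fin d → ℝ) → ℝ) → ℝ) (hT : T 0 = 0) :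
    ∑ k, T (pdv k (fun x : Fin d → ℝ => φ (x e.1) (x e.2))) * v k =
      ∑ u : Bool, T (fun x => bpd u φ (x e.1) (x e.2)) * v (sel e u) := by
  have h : ∀ k, T (pdv k (fun x : Fin d → ℝ => φ (x e.1) (x e.2))) * v k =
      (if k = e.1 then T (fun x => bpd false φ (x e.1) (x e.2)) * v e.1 else 0) +
      (if k = e.2 then T (fun x => bpd true φ (x e.1) (x e.2)) * v e.2 else 0) := by
    intro k
    rw [pdv_biv e he]
    by_cases h : k = e.1
    · subst h
      simp [he]
    · by_cases h' : k = e.2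
      · subst h'
        simp [h]
      · simp [h, h', hT]
  simp_rw [h, Finset.sum_add_distrib, Finset.sum_ite_eq', Finset.mem_univ, if_true]
  simp [sel, add_comm]

lemma D3_biv {d : ℕ} (v ζ : Fin d → ℝ) (e : Fin d × Fin d) (he : e.1 ≠ e.2)
    (φ : ℝ → ℝ → ℝ) :
    D3 v ζ (fun x => φ (x e.1) (x e.2)) =
      ∑ u₃ : Bool, ∑ u₂ : Bool, ∑ u₁ : Bool,
        bpd u₁ (bpd u₂ (bpd u₃ φ)) (ζ e.1) (ζ e.2) * v (sel e u₁) * v (sel e u₂) *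
          v (sel e u₃) := by
  -- The slot `k` of the innermost derivative is contracted first, since only `pdv k` is applied
  -- to the component itself; hence the exchange of summation order.
  have h0 : D3 v ζ (fun x => φ (x e.1) (x e.2)) =
      ∑ k, (∑ j, (∑ i, pdv i (pdv j (pdv k (fun x => φ (x e.1) (x e.2)))) ζ * v i) * v j)
        * v k := by
    simp only [D3, Finset.sum_mul]
    rw [Finset.sum_comm, Finset.sum_congr rfl fun _ _ => Finset.sum_comm, Finset.sum_comm]
  rw [h0, sum_pdv_biv v e he φ
    (fun g => ∑ j, (∑ i, pdv i (pdv j g) ζ * v i) * v j) (by simp [pdv_zero])]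
  simp only [Finset.sum_mul]
  refine Finset.sum_congr rfl fun u₃ _ => ?_
  simp only [← Finset.sum_mul]
  rw [sum_pdv_biv v e he (bpd u₃ φ) (fun g => ∑ i, pdv i g ζ * v i) (by simp [pdv_zero])]
  simp_rw [fun u₂ => sum_pdv_biv v e he (bpd u₂ (bpd u₃ φ)) (fun g => g ζ) rfl]

lemma abs_term_le {a x y z B s : ℝ} (ha : |a| ≤ B) (hx : |x| ≤ s) (hy : |y| ≤ s)
    (hz : |z| ≤ s) : |a * x * y * z| ≤ B * s ^ 3 := by
  have hs : 0 ≤ s := (abs_nonneg x).trans hx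
  have hB : 0 ≤ B := (abs_nonneg a).trans ha
  rw [abs_mul, abs_mul, abs_mul]
  calc |a| * |x| * |y| * |z| ≤ B * s * s * s := by gcongr
    _ = B * s ^ 3 := by ring

lemma abs_D3_biv_le {d : ℕ} (v ζ : Fin d → ℝ) (e : Fin d × Fin d) (he : e.1 ≠ e.2)
    (φ : ℝ → ℝ → ℝ) (B s : ℝ) (hv : ∀ q, |v q| ≤ s)
    (hB : ∀ u₁ u₂ u₃ : Bool, |bpd u₁ (bpd u₂ (bpd u₃ φ)) (ζ e.1) (ζ e.2)| ≤ B) :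
    |D3 v ζ (fun x => φ (x e.1) (x e.2))| ≤ 8 * (B * s ^ 3) := by
  rw [D3_biv v ζ e he]
  calc _ ≤ ∑ u₃ : Bool, ∑ u₂ : Bool, ∑ u₁ : Bool, B * s ^ 3 := by
        refine (abs_sum_le_sum_abs _ _).trans (sum_le_sum fun u₃ _ => ?_)
        refine (abs_sum_le_sum_abs _ _).trans (sum_le_sum fun u₂ _ => ?_)
        refine (abs_sum_le_sum_abs _ _).trans (sum_le_sum fun u₁ _ => ?_)
        exact abs_term_le (hB u₁ u₂ u₃) (hv _) (hv _) (hv _)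
    _ = 8 * (B * s ^ 3) := by
        simp only [sum_const, card_univ, Fintype.card_bool, nsmul_eq_mul]
        push_cast
        ring

lemma D3_uni {d : ℕ} (v ζ : Fin d → ℝ) (p : Fin d) (φ : ℝ → ℝ) :
    D3 v ζ (fun x => φ (x p)) = iteratedDeriv 3 φ (ζ p) * v p * v p * v p := by
  have h : ∀ i j k, pdv i (pdv j (pdv k (fun x : Fin d → ℝ => φ (x p)))) ζ =
      if k = p then if j = p then if i = p then iteratedDeriv 3 φ (ζ p) else 0 else 0 else 0 := by
    intro i j k
    rw [pdv_uni]
    split_ifs <;> simp_all [pdv_uni, pdv_zero, iteratedDeriv_succ]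
  simp only [D3, h, ite_mul, zero_mul, Finset.sum_ite_eq', Finset.mem_univ, if_true]

lemma abs_D3_uni_le {d : ℕ} (v ζ : Fin d → ℝ) (p : Fin d) (φ : ℝ → ℝ) (B s : ℝ)
    (hv : ∀ q, |v q| ≤ s) (hB : |iteratedDeriv 3 φ (ζ p)| ≤ B) :
    |D3 v ζ (fun x => φ (x p))| ≤ B * s ^ 3 := by
  rw [D3_uni]
  exact abs_term_le hB (hv p) (hv p) (hv p)

/-- Handshake inequality: every pair contains two distinct variables, each of degree at most the
maximal degree. -/
lemma two_mul_card_le {d : ℕ} (S₂ : Finset (Fin d × Fin d)) (hS₂ : ∀ e ∈ S₂, e.1 < e.2) :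
    2 * S₂.card ≤ (varsS S₂).sup (degS S₂) * (varsS S₂).card := by
  have h1 : ∑ l ∈ varsS S₂, degS S₂ l ≤ (varsS S₂).card * (varsS S₂).sup (degS S₂) := by
    rw [← smul_eq_mul]
    exact sum_le_card_nsmul _ _ _ fun l hl => le_sup hl
  have h2 : ∑ l ∈ varsS S₂, degS S₂ l = ∑ e ∈ S₂, 2 := by
    simp only [degS, card_filter]
    rw [sum_comm]
    refine sum_congr rfl fun e he => ?_
    rw [← card_filter]
    have h : (varsS S₂).filter (fun l => e.1 = l ∨ e.2 = l) = {e.1, e.2} := by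
      ext l
      simp only [mem_filter, mem_insert, mem_singleton, varsS, mem_union, mem_image]
      constructor
      · rintro ⟨_, h | h⟩ <;> simp [h]
      · rintro (rfl | rfl)
        · exact ⟨Or.inl ⟨e, he, rfl⟩, Or.inl rfl⟩
        · exact ⟨Or.inr ⟨e, he, rfl⟩, Or.inr rfl⟩
    rw [h, card_pair (hS₂ e he).ne]
  rw [h2, sum_const, smul_eq_mul] at h1
  linarith

lemma one_div_sqrt_pow_three (m : ℕ) :
    (1 / Real.sqrt m) ^ 3 = 1 / (m : ℝ) ^ ((3 : ℝ) / 2) := by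
  rw [div_pow, one_pow, Real.sqrt_eq_rpow, ← Real.rpow_natCast, ← Real.rpow_mul (Nat.cast_nonneg m)]
  norm_num

/-- bound on the third directional derivative of a generalized sparse
additive model with C³ components whose third-order partials are bounded by `B₃`. -/
theorem stmt3 {d : ℕ} (hd : 2 ≤ d)
    (S₁ : Finset (Fin d)) (S₂ : Finset (Fin d × Fin d))
    (hS₂ : ∀ e ∈ S₂, e.1 < e.2)
    (hdisj : Disjoint S₁ (varsS S₂))
    (ρ K : ℕ) (hρ : ρ = (varsS S₂).sup (degS S₂))
    (hK : K = S₁.card + (varsS S₂).card)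
    (c r B₃ : ℝ) (hr : 0 < r) (hB₃ : 0 ≤ B₃)
    (φ₁ : Fin d → ℝ → ℝ) (φ₂ : Fin d × Fin d → ℝ → ℝ → ℝ) (ψ : Fin d → ℝ → ℝ)
    (hφ₁ : ∀ p, ContDiff ℝ 3 (φ₁ p))
    (hφ₂ : ∀ e, ContDiff ℝ 3 (fun z : ℝ × ℝ => φ₂ e z.1 z.2))
    (hψ : ∀ q, ContDiff ℝ 3 (ψ q))
    (hBφ₁ : ∀ p ∈ S₁, ∀ t ∈ Set.Icc (-(1+r)) (1+r), |iteratedDeriv 3 (φ₁ p) t| ≤ B₃)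
    (hBψ : ∀ q ∈ (varsS S₂).filter (fun q => 1 < degS S₂ q),
      ∀ t ∈ Set.Icc (-(1+r)) (1+r), |iteratedDeriv 3 (ψ q) t| ≤ B₃)
    (hBφ₂ : ∀ e ∈ S₂, ∀ u₁ u₂ u₃ : Bool, ∀ a ∈ Set.Icc (-(1+r)) (1+r),
      ∀ b ∈ Set.Icc (-(1+r)) (1+r), |bpd u₁ (bpd u₂ (bpd u₃ (φ₂ e))) a b| ≤ B₃)
    (f : (Fin d → ℝ) → ℝ)
    (hf : ∀ x, f x = c + (∑ p ∈ S₁, φ₁ p (x p)) + (∑ e ∈ S₂, φ₂ e (x e.1) (x e.2))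
        + ∑ q ∈ (varsS S₂).filter (fun q => 1 < degS S₂ q), ψ q (x q))
    (m : ℕ) (hm : 1 ≤ m)
    (v : Fin d → ℝ) (hv : ∀ q : Fin d, |v q| ≤ 1 / Real.sqrt m)
    (ζ : Fin d → ℝ) (hζ : ∀ i, ζ i ∈ Set.Icc (-(1+r)) (1+r)) :
    |∑ i : Fin d, ∑ j : Fin d, ∑ k : Fin d,
        pdv i (pdv j (pdv k f)) ζ * v i * v j * v k|
      ≤ (4 * (ρ : ℝ) + 1) * (K : ℝ) * B₃ / (m : ℝ) ^ ((3 : ℝ) / 2) := by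
  have hsplit : f = ((((fun _ => c) + fun x => ∑ p ∈ S₁, φ₁ p (x p)) +
      fun x => ∑ e ∈ S₂, φ₂ e (x e.1) (x e.2)) +
      fun x => ∑ q ∈ (varsS S₂).filter (fun q => 1 < degS S₂ q), ψ q (x q)) := by
    funext x
    simp [hf x]
  have c₁ : ∀ p, ContDiff ℝ 3 (fun x : Fin d → ℝ => φ₁ p (x p)) := fun p =>
    (hφ₁ p).comp (contDiff_apply ℝ ℝ p)
  have cψ : ∀ p, ContDiff ℝ 3 (fun x : Fin d → ℝ => ψ p (x p)) := fun p =>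
    (hψ p).comp (contDiff_apply ℝ ℝ p)
  have c₂ : ∀ e : Fin d × Fin d, ContDiff ℝ 3 (fun x : Fin d → ℝ => φ₂ e (x e.1) (x e.2)) :=
    fun e => (hφ₂ e).comp ((contDiff_apply ℝ ℝ e.1).prodMk (contDiff_apply ℝ ℝ e.2))
  set s : ℝ := 1 / Real.sqrt m with hs
  have b₁ := abs_D3_sum_le v ζ S₁ (fun p x => φ₁ p (x p)) (B₃ * s ^ 3) (fun p _ => c₁ p)
    fun p hp => abs_D3_uni_le v ζ p (φ₁ p) B₃ s hv (hBφ₁ p hp _ (hζ p))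
  have bψ := abs_D3_sum_le v ζ ((varsS S₂).filter (fun q => 1 < degS S₂ q))
    (fun p x => ψ p (x p)) (B₃ * s ^ 3) (fun p _ => cψ p)
    fun p hp => abs_D3_uni_le v ζ p (ψ p) B₃ s hv (hBψ p hp _ (hζ p))
  have b₂ := abs_D3_sum_le v ζ S₂ (fun e x => φ₂ e (x e.1) (x e.2)) (8 * (B₃ * s ^ 3))
    (fun e _ => c₂ e) fun e he => abs_D3_biv_le v ζ e (hS₂ e he).ne (φ₂ e) B₃ s hv
      fun u₁ u₂ u₃ => hBφ₂ e he u₁ u₂ u₃ _ (hζ e.1) _ (hζ e.2)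
  have s₁ : ContDiff ℝ 3 (fun x : Fin d → ℝ => ∑ p ∈ S₁, φ₁ p (x p)) :=
    ContDiff.sum fun p _ => c₁ p
  have s₂ : ContDiff ℝ 3 (fun x : Fin d → ℝ => ∑ e ∈ S₂, φ₂ e (x e.1) (x e.2)) :=
    ContDiff.sum fun e _ => c₂ e
  have sψ : ContDiff ℝ 3 (fun x : Fin d → ℝ =>
      ∑ q ∈ (varsS S₂).filter (fun q => 1 < degS S₂ q), ψ q (x q)) :=
    ContDiff.sum fun p _ => cψ p
  have s₀ : ContDiff ℝ 3 (fun _ : Fin d → ℝ => c) := contDiff_const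
  have s₀₁ : ContDiff ℝ 3 ((fun _ : Fin d → ℝ => c) + fun x => ∑ p ∈ S₁, φ₁ p (x p)) :=
    s₀.add s₁
  have s₀₂ : ContDiff ℝ 3 (((fun _ : Fin d → ℝ => c) + fun x => ∑ p ∈ S₁, φ₁ p (x p)) +
      fun x => ∑ e ∈ S₂, φ₂ e (x e.1) (x e.2)) := s₀₁.add s₂
  change |D3 v ζ f| ≤ _
  rw [hsplit, D3_add v ζ s₀₂ sψ, D3_add v ζ s₀₁ s₂, D3_add v ζ s₀ s₁, D3_const, zero_add]
  have hR : (4 * (ρ : ℝ) + 1) * (K : ℝ) * B₃ / (m : ℝ) ^ ((3 : ℝ) / 2) =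
      (4 * (ρ : ℝ) + 1) * K * (B₃ * s ^ 3) := by
    rw [hs, one_div_sqrt_pow_three]
    ring
  rw [hR]
  have hM : 0 ≤ B₃ * s ^ 3 := by positivity
  have hcount : (S₁.card : ℝ) + S₂.card * 8 +
      ((varsS S₂).filter (fun q => 1 < degS S₂ q)).card ≤ (4 * (ρ : ℝ) + 1) * K := by
    have h1 := two_mul_card_le S₂ hS₂
    rw [← hρ] at h1
    have h2 := card_filter_le (varsS S₂) (fun q => 1 < degS S₂ q)
    have h3 : S₁.card + S₂.card * 8 + ((varsS S₂).filter (fun q => 1 < degS S₂ q)).card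
        ≤ (4 * ρ + 1) * K := by
      rw [hK]
      nlinarith [Nat.zero_le (ρ * S₁.card)]
    exact_mod_cast h3
  have hfin := mul_le_mul_of_nonneg_right hcount hM
  refine (abs_add_le _ _).trans ((add_le_add (abs_add_le _ _) le_rfl).trans ?_)
  linarith
end

section
/- Let f be a generalized sparse additive model whose components are continuously differentiable, let P = {1,…,d} \ var(S₂), and suppose that for each p ∈ S₁ there exists an interval I_p ⊆ [−1,1] of Lebesgue measure at least λ₁ > 0 with |φ_p'(t)| > D₁ for all t ∈ I_p. Let m'_x ≥ 1/λ₁ be a positive integer and G = { j/m'_x : j ∈ ℤ, −m'_x ≤ j ≤ m'_x }. For t ∈ G let x_t ∈ ℝ^d be the point with (x_t)_j = t for j ∈ P and (x_t)_j = 0 for j ∉ P. Suppose ĝ assigns to each p ∈ P and t ∈ G a real number with |ĝ_p(t) − ∂_p f(x_t)| ≤ τ'' for all p ∈ P, t ∈ G, where 0 ≤ τ'' < D₁/2. Then { p ∈ P : there exists t ∈ G with |ĝ_p(t)| > τ'' } equals S₁. -/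
/-!
Moving only the coordinate `p ∉ var(S₂)` leaves every bivariate term and every `ψ q` fixed, so
`∂_p f (x_t)` is `φ_p'(t)` when `p ∈ S₁` and `0` otherwise (`pdv_model`). If `p ∉ S₁`, every estimate
`ĝ_p(t)` is therefore at most `τ''` in absolute value. If `p ∈ S₁`, it suffices to find a grid point
with `|φ_p'(t)| ≥ D₁ > 2 τ''`. An interval `I_p` of length at least `λ₁ ≥ 1 / m'_x` may miss the grid
when it is open, but its closure cannot (`exists_grid_mem_closure`), and by continuity of `φ_p'` the
weak inequality `|φ_p'| ≥ D₁` holds on the closure.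
-/

open Finset

/-- On a coordinate outside `var(S₂)`, the partial derivative of the model is that of its univariate
component, or zero if there is none. -/
lemma pdv_model {d : ℕ} (S₁ : Finset (Fin d)) (S₂ : Finset (Fin d × Fin d))
    (c : ℝ) (φ₁ : Fin d → ℝ → ℝ) (φ₂ : Fin d × Fin d → ℝ → ℝ → ℝ) (ψ : Fin d → ℝ → ℝ)
    (f : (Fin d → ℝ) → ℝ)
    (hf : ∀ x, f x = c + (∑ p ∈ S₁, φ₁ p (x p)) + (∑ e ∈ S₂, φ₂ e (x e.1) (x e.2))
        + ∑ q ∈ (varsS S₂).filter (fun q => 1 < degS S₂ q), ψ q (x q))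
    (p : Fin d) (hp : p ∉ varsS S₂) (x : Fin d → ℝ) (hφ : DifferentiableAt ℝ (φ₁ p) (x p)) :
    pdv p f x = if p ∈ S₁ then deriv (φ₁ p) (x p) else 0 := by
  have hne : ∀ q ∈ varsS S₂, q ≠ p := fun q hq h => hp (h ▸ hq)
  have h1 : ∀ e ∈ S₂, e.1 ≠ p := fun e he =>
    hne _ (mem_union_left _ (mem_image_of_mem _ he))
  have h2 : ∀ e ∈ S₂, e.2 ≠ p := fun e he =>
    hne _ (mem_union_right _ (mem_image_of_mem _ he))
  have hfun : (fun s => f (Function.update x p s)) = fun s =>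
      (∑ q ∈ S₁, φ₁ q (Function.update x p s q)) + (c + (∑ e ∈ S₂, φ₂ e (x e.1) (x e.2))
        + ∑ q ∈ (varsS S₂).filter (fun q => 1 < degS S₂ q), ψ q (x q)) := by
    funext s
    have e2 : ∑ e ∈ S₂, φ₂ e (Function.update x p s e.1) (Function.update x p s e.2)
        = ∑ e ∈ S₂, φ₂ e (x e.1) (x e.2) :=
      sum_congr rfl fun e he => by
        rw [Function.update_of_ne (h1 e he), Function.update_of_ne (h2 e he)]
    have e3 : ∑ q ∈ (varsS S₂).filter (fun q => 1 < degS S₂ q), ψ q (Function.update x p s q)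
        = ∑ q ∈ (varsS S₂).filter (fun q => 1 < degS S₂ q), ψ q (x q) :=
      sum_congr rfl fun q hq => by rw [Function.update_of_ne (hne q (mem_filter.1 hq).1)]
    rw [hf, e2, e3]
    ring
  have hsum : HasDerivAt (fun s => ∑ q ∈ S₁, φ₁ q (Function.update x p s q))
      (∑ q ∈ S₁, if p = q then deriv (φ₁ p) (x p) else 0) (x p) := by
    refine HasDerivAt.fun_sum fun q _ => ?_
    by_cases hq : p = q
    · subst hq
      simpa using hφ.hasDerivAt
    · simpa [hq, Function.update_of_ne (Ne.symm hq)] using hasDerivAt_const (x p) (φ₁ q (x q))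
  rw [sum_ite_eq] at hsum
  rw [pdv, hfun]
  exact (hsum.add_const _).deriv

/-- The closure of a connected subset of `[-1, 1]` of measure at least `1 / m` meets the grid of mesh
`1 / m`. -/
lemma exists_grid_mem_closure {I : Set ℝ} (hI : I ⊆ Set.Icc (-1 : ℝ) 1) (hc : IsConnected I)
    {lam : ℝ} (hlam : 0 < lam) (hvol : ENNReal.ofReal lam ≤ MeasureTheory.volume I)
    {m : ℕ} (hm : 0 < m) (hmlam : 1 / lam ≤ (m : ℝ)) :
    ∃ j : ℤ, -(m : ℤ) ≤ j ∧ j ≤ (m : ℤ) ∧ (j : ℝ) / (m : ℝ) ∈ closure I := by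
  have hbb : BddBelow I := bddBelow_Icc.mono hI
  have hba : BddAbove I := bddAbove_Icc.mono hI
  have ha : sInf I ∈ closure I := csInf_mem_closure hc.nonempty hbb
  have hb : sSup I ∈ closure I := csSup_mem_closure hc.nonempty hba
  have hsub : Set.Icc (sInf I) (sSup I) ⊆ closure I := hc.closure.Icc_subset ha hb
  have hlen : lam ≤ sSup I - sInf I := by
    have h : ENNReal.ofReal lam ≤ ENNReal.ofReal (sSup I - sInf I) := by
      rw [← Real.volume_Icc]
      exact hvol.trans (MeasureTheory.measure_mono (subset_Icc_csInf_csSup hbb hba))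
    by_contra! hlt
    exact absurd h (not_le.2 ((ENNReal.ofReal_lt_ofReal_iff hlam).2 hlt))
  have hcl : closure I ⊆ Set.Icc (-1 : ℝ) 1 := closure_minimal hI isClosed_Icc
  have hm' : (0 : ℝ) < m := by exact_mod_cast hm
  have hprod : 1 ≤ (m : ℝ) * lam := (div_le_iff₀ hlam).1 hmlam
  -- The first grid point to the right of `inf I` is at distance less than `1 / m ≤ sup I - inf I`.
  have hj1 := Int.le_ceil (sInf I * m)
  have hj2 := Int.ceil_lt_add_one (sInf I * m)
  have hmem : ((⌈sInf I * m⌉ : ℤ) : ℝ) / (m : ℝ) ∈ closure I := by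
    refine hsub ⟨(le_div_iff₀ hm').2 hj1, (div_le_iff₀ hm').2 ?_⟩
    nlinarith
  refine ⟨⌈sInf I * m⌉, ?_, ?_, hmem⟩
  · have h := (le_div_iff₀ hm').1 (hcl hmem).1
    have h' : ((-(m : ℤ) : ℤ) : ℝ) ≤ ((⌈sInf I * m⌉ : ℤ) : ℝ) := by
      push_cast
      linarith
    exact_mod_cast h'
  · have h := (div_le_iff₀ hm').1 (hcl hmem).2
    rw [one_mul] at h
    exact_mod_cast h

/-- exact recovery of `S₁` by thresholding approximate partial
derivatives of `f` on the diagonal grid points restricted to `P = [d] \ var(S₂)`. -/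
theorem stmt9 {d : ℕ} (hd : 2 ≤ d)
    (S₁ : Finset (Fin d)) (S₂ : Finset (Fin d × Fin d))
    (hS₂ : ∀ e ∈ S₂, e.1 < e.2)
    (hdisj : Disjoint S₁ (varsS S₂))
    (c : ℝ) (φ₁ : Fin d → ℝ → ℝ) (φ₂ : Fin d × Fin d → ℝ → ℝ → ℝ) (ψ : Fin d → ℝ → ℝ)
    (hφ₁ : ∀ p, ContDiff ℝ 1 (φ₁ p))
    (hφ₂ : ∀ e, ContDiff ℝ 1 (fun z : ℝ × ℝ => φ₂ e z.1 z.2))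
    (hψ : ∀ q, ContDiff ℝ 1 (ψ q))
    (f : (Fin d → ℝ) → ℝ)
    (hf : ∀ x, f x = c + (∑ p ∈ S₁, φ₁ p (x p)) + (∑ e ∈ S₂, φ₂ e (x e.1) (x e.2))
        + ∑ q ∈ (varsS S₂).filter (fun q => 1 < degS S₂ q), ψ q (x q))
    (lam₁ D₁ : ℝ) (hlam₁ : 0 < lam₁)
    (hI : ∀ p ∈ S₁, ∃ I : Set ℝ,
        I ⊆ Set.Icc (-1 : ℝ) 1 ∧ IsConnected I ∧
        ENNReal.ofReal lam₁ ≤ MeasureTheory.volume I ∧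
        ∀ t ∈ I, D₁ < |deriv (φ₁ p) t|)
    (mx : ℕ) (hmx : 0 < mx) (hmxlam : 1 / lam₁ ≤ (mx : ℝ))
    (G : Set ℝ)
    (hG : G = {t : ℝ | ∃ j : ℤ, -(mx : ℤ) ≤ j ∧ j ≤ (mx : ℤ) ∧ t = (j : ℝ) / (mx : ℝ)})
    (xt : ℝ → Fin d → ℝ)
    (hxt : ∀ t : ℝ, ∀ j : Fin d, xt t j = if j ∈ varsS S₂ then 0 else t)
    (ghat : Fin d → ℝ → ℝ) (τ'' : ℝ)
    (hτ''0 : 0 ≤ τ'') (hτ''D : τ'' < D₁ / 2)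
    (happrox : ∀ p : Fin d, p ∉ varsS S₂ → ∀ t ∈ G,
        |ghat p t - pdv p f (xt t)| ≤ τ'') :
    {p : Fin d | p ∉ varsS S₂ ∧ ∃ t ∈ G, τ'' < |ghat p t|}
      = (S₁ : Set (Fin d)) := by
  have hpdv : ∀ p : Fin d, p ∉ varsS S₂ → ∀ t,
      pdv p f (xt t) = if p ∈ S₁ then deriv (φ₁ p) t else 0 := by
    intro p hp t
    have h := pdv_model S₁ S₂ c φ₁ φ₂ ψ f hf p hp (xt t)
      ((hφ₁ p).differentiable one_ne_zero _)
    rwa [hxt t p, if_neg hp] at h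
  ext p
  constructor
  · rintro ⟨hp, t, ht, hgt⟩
    by_contra hpS
    have hpS' : p ∉ S₁ := hpS
    have h := happrox p hp t ht
    rw [hpdv p hp t, if_neg hpS', sub_zero] at h
    exact absurd h (not_le.2 hgt)
  · intro hpS
    have hpS' : p ∈ S₁ := hpS
    have hp : p ∉ varsS S₂ := disjoint_left.1 hdisj hpS'
    obtain ⟨I, hI1, hIc, hvol, hder⟩ := hI p hpS'
    obtain ⟨j, hj1, hj2, hj⟩ := exists_grid_mem_closure hI1 hIc hlam₁ hvol hmx hmxlam
    have hcont : Continuous fun t => |deriv (φ₁ p) t| :=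
      ((hφ₁ p).continuous_deriv le_rfl).abs
    have hD : D₁ ≤ |deriv (φ₁ p) ((j : ℝ) / (mx : ℝ))| :=
      closure_minimal (fun t ht => (hder t ht).le) (isClosed_le continuous_const hcont) hj
    have hG' : (j : ℝ) / (mx : ℝ) ∈ G := by
      rw [hG]
      exact ⟨j, hj1, hj2, rfl⟩
    refine ⟨hp, _, hG', ?_⟩
    have h := happrox p hp _ hG'
    rw [hpdv p hp, if_pos hpS', abs_sub_comm] at h
    have := abs_sub_abs_le_abs_sub (deriv (φ₁ p) ((j : ℝ) / (mx : ℝ)))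
      (ghat p ((j : ℝ) / (mx : ℝ)))
    linarith
end

section
/- Let f be a generalized sparse additive model with continuous components satisfying the centering conditions: E_p[φ_p] = 0 for each p ∈ S₁; each bivariate component φ_{(l,l')} is doubly centered, i.e. its average over [−1,1] in either one of its two arguments vanishes identically as a function of the other argument; and E_q[φ_q] = 0 for each q ∈ var(S₂) with deg(q) > 1 (all averages with respect to the uniform probability measure on [−1,1]). Fix (l,l') ∈ S₂, and let F(x_l, x_{l'}) denote the average of f over all coordinates other than l and l' with respect to the uniform probability measure on [−1,1]^{d−2}. Then for all (x_l, x_{l'}) ∈ [−1,1]², the doubly centered function F(x_l,x_{l'}) − (1/2)∫_{−1}^{1} F(s,x_{l'}) ds − (1/2)∫_{−1}^{1} F(x_l,t) dt + (1/4)∫_{[−1,1]²} F(s,t) ds dt equals φ_{(l,l')}(x_l, x_{l'}). -/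
/-!
Averaging out every coordinate except `l` and `l'` turns each summand of the model other than
`φ_{(l,l')}` into a continuous function of `x_l` plus a continuous function of `x_{l'}`:
a univariate summand depends on at most one of the two coordinates, and a bivariate summand
`φ_e` with `e ≠ (l,l')` has, since pairs are ordered, at most one index in `{l,l'}`, so its average
is a constant or vanishes by the centering of `φ_e`. Hence `F(a,b) = φ_{(l,l')}(a,b) + g(a) + h(b)`
on the square (`IsAvgSum` records this shape for the remainder). Double centering annihilates `g`
and `h`, and fixes `φ_{(l,l')}` because the latter is already doubly centered.
-/

open Finset MeasureTheory

/-- The uniform probability measure on `[−1,1]`. -/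
noncomputable def unifMeas : Measure ℝ :=
  (2 : ENNReal)⁻¹ • volume.restrict (Set.Icc (-1 : ℝ) 1)

instance : IsProbabilityMeasure unifMeas := by
  constructor
  simp only [unifMeas, Measure.smul_apply, Measure.restrict_apply_univ, Real.volume_Icc,
    smul_eq_mul]
  norm_num
  exact ENNReal.inv_mul_cancel (by norm_num) (by norm_num)

theorem integral_unifMeas (u : ℝ → ℝ) :
    ∫ s, u s ∂unifMeas = (1 / 2) * ∫ s in (-1 : ℝ)..1, u s := by
  rw [unifMeas, integral_smul_measure, intervalIntegral.integral_of_le (by norm_num),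
    integral_Icc_eq_integral_Ioc]
  simp

theorem ae_unifMeas : ∀ᵐ s ∂unifMeas, s ∈ Set.Icc (-1 : ℝ) 1 :=
  Measure.ae_smul_measure (ae_restrict_mem measurableSet_Icc) _

/-- Continuous functions are integrable for the uniform measure on the cube, which is carried by
a compact set. -/
theorem integrable_cube {d : ℕ} {G : (Fin d → ℝ) → ℝ} (hG : Continuous G) :
    Integrable G (Measure.pi fun _ : Fin d => unifMeas) := by
  have hK : IsCompact (Set.univ.pi fun _ : Fin d => Set.Icc (-1 : ℝ) 1) :=
    isCompact_univ_pi fun _ => isCompact_Icc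
  obtain ⟨C, hC⟩ := hK.exists_bound_of_continuousOn hG.continuousOn
  refine Integrable.of_bound hG.aestronglyMeasurable C ?_
  have h : ∀ᵐ y ∂(Measure.pi fun _ : Fin d => unifMeas), ∀ i, y i ∈ Set.Icc (-1 : ℝ) 1 :=
    ae_all_iff.2 fun i =>
      (measurePreserving_eval (fun _ : Fin d => unifMeas) i).quasiMeasurePreserving.ae ae_unifMeas
  filter_upwards [h] with y hy
  exact hC y fun i _ => hy i

/-- The average over one coordinate of a centered function vanishes. -/
theorem integral_cube_eval {d : ℕ} {u : ℝ → ℝ} (hu : Continuous u) (i : Fin d)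
    (h0 : (1 / 2) * ∫ s in (-1 : ℝ)..1, u s = 0) :
    ∫ y, u (y i) ∂(Measure.pi fun _ : Fin d => unifMeas) = 0 := by
  rw [integral_comp_eval (μ := fun _ : Fin d => unifMeas) hu.aestronglyMeasurable,
    integral_unifMeas, h0]

/-- `T` is continuous, and its average over all coordinates other than `l` and `l'` is, on
`[-1,1]²`, a sum of a continuous function of `x_l` and a continuous function of `x_{l'}`. -/
def IsAvgSum {d : ℕ} (l l' : Fin d) (T : (Fin d → ℝ) → ℝ) : Prop :=
  Continuous T ∧ ∃ g h : ℝ → ℝ, Continuous g ∧ Continuous h ∧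
    ∀ a ∈ Set.Icc (-1 : ℝ) 1, ∀ b ∈ Set.Icc (-1 : ℝ) 1,
      ∫ y, T (Function.update (Function.update y l a) l' b)
        ∂(Measure.pi fun _ : Fin d => unifMeas) = g a + h b

theorem integrable_update {d : ℕ} {T : (Fin d → ℝ) → ℝ} (hT : Continuous T) (l l' : Fin d)
    (a b : ℝ) : Integrable (fun y => T (Function.update (Function.update y l a) l' b))
      (Measure.pi fun _ : Fin d => unifMeas) :=
  integrable_cube (hT.comp (by fun_prop))

theorem IsAvgSum.const {d : ℕ} (l l' : Fin d) (c : ℝ) : IsAvgSum l l' fun _ => c :=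
  ⟨continuous_const, fun _ => c, fun _ => 0, continuous_const, continuous_const, by simp⟩

theorem IsAvgSum.add {d : ℕ} {l l' : Fin d} {T U : (Fin d → ℝ) → ℝ}
    (hT : IsAvgSum l l' T) (hU : IsAvgSum l l' U) : IsAvgSum l l' fun x => T x + U x := by
  obtain ⟨cT, g, h, hg, hh, e⟩ := hT
  obtain ⟨cU, g', h', hg', hh', e'⟩ := hU
  refine ⟨cT.add cU, fun a => g a + g' a, fun b => h b + h' b, hg.add hg', hh.add hh', ?_⟩
  intro a ha b hb
  rw [integral_add (integrable_update cT l l' a b) (integrable_update cU l l' a b),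
    e a ha b hb, e' a ha b hb]
  ring

theorem IsAvgSum.sum {d : ℕ} {l l' : Fin d} {ι : Type*} (s : Finset ι)
    {T : ι → (Fin d → ℝ) → ℝ} (hT : ∀ i ∈ s, IsAvgSum l l' (T i)) :
    IsAvgSum l l' fun x => ∑ i ∈ s, T i x := by
  classical
  induction s using Finset.induction_on with
  | empty => simpa using IsAvgSum.const l l' 0
  | insert i s hi ih =>
    simp only [Finset.sum_insert hi]
    exact (hT i (mem_insert_self i s)).add (ih fun j hj => hT j (mem_insert_of_mem hj))

theorem IsAvgSum.univariate {d : ℕ} {l l' : Fin d} (hl : l ≠ l') {u : ℝ → ℝ}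
    (hu : Continuous u) (p : Fin d) : IsAvgSum l l' fun x => u (x p) := by
  refine ⟨by fun_prop, ?_⟩
  by_cases h1 : p = l
  · subst h1
    exact ⟨u, fun _ => 0, hu, continuous_const, by simp [Function.update_of_ne hl]⟩
  by_cases h2 : p = l'
  · subst h2
    exact ⟨fun _ => 0, u, continuous_const, hu, by simp⟩
  refine ⟨fun _ => ∫ y, u (y p) ∂(Measure.pi fun _ : Fin d => unifMeas), fun _ => 0,
    continuous_const, continuous_const, ?_⟩
  simp [Function.update_of_ne h1, Function.update_of_ne h2]

/-- A doubly centered bivariate component on an ordered pair other than `(l, l')` involves at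
least one averaged coordinate; its average is constant if it involves two, and zero otherwise. -/
theorem IsAvgSum.bivariate {d : ℕ} {l l' : Fin d} (hl : l < l') {u : ℝ → ℝ → ℝ}
    (hu : Continuous fun z : ℝ × ℝ => u z.1 z.2)
    (ha : ∀ b ∈ Set.Icc (-1 : ℝ) 1, (1 / 2) * ∫ a in (-1 : ℝ)..1, u a b = 0)
    (hb : ∀ a ∈ Set.Icc (-1 : ℝ) 1, (1 / 2) * ∫ b in (-1 : ℝ)..1, u a b = 0)
    {i j : Fin d} (hij : i < j) (hne : (i, j) ≠ (l, l')) :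
    IsAvgSum l l' fun x => u (x i) (x j) := by
  have c1 : ∀ b, Continuous fun a => u a b := fun b =>
    hu.comp (f := fun a : ℝ => (a, b)) (by fun_prop)
  have c2 : ∀ a, Continuous fun b => u a b := fun a =>
    hu.comp (f := fun b : ℝ => (a, b)) (by fun_prop)
  refine ⟨hu.comp (f := fun x : Fin d → ℝ => (x i, x j)) (by fun_prop), ?_⟩
  by_cases hi : i = l ∨ i = l'
  · have hj1 : j ≠ l := by rintro rfl; rcases hi with rfl | rfl <;> order
    have hj2 : j ≠ l' := by
      rintro rfl; rcases hi with rfl | rfl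
      · exact hne rfl
      · order
    refine ⟨fun _ => 0, fun _ => 0, continuous_const, continuous_const, ?_⟩
    intro a haa b hbb
    rcases hi with rfl | rfl
    · simp only [Function.update_of_ne hj1, Function.update_of_ne hj2,
        Function.update_of_ne hl.ne, Function.update_self]
      simpa using integral_cube_eval (c2 a) j (hb a haa)
    · simp only [Function.update_of_ne hj1, Function.update_of_ne hj2, Function.update_self]
      simpa using integral_cube_eval (c2 b) j (hb b hbb)
  · push Not at hi
    by_cases hj : j = l ∨ j = l'
    · refine ⟨fun _ => 0, fun _ => 0, continuous_const, continuous_const, ?_⟩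
      intro a haa b hbb
      rcases hj with rfl | rfl
      · simp only [Function.update_of_ne hi.1, Function.update_of_ne hi.2,
          Function.update_of_ne hl.ne, Function.update_self]
        simpa using integral_cube_eval (c1 a) i (ha a haa)
      · simp only [Function.update_of_ne hi.1, Function.update_of_ne hi.2, Function.update_self]
        simpa using integral_cube_eval (c1 b) i (ha b hbb)
    · push Not at hj
      refine ⟨fun _ => ∫ y, u (y i) (y j) ∂(Measure.pi fun _ : Fin d => unifMeas), fun _ => 0,
        continuous_const, continuous_const, ?_⟩
      simp [Function.update_of_ne hi.1, Function.update_of_ne hi.2,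
        Function.update_of_ne hj.1, Function.update_of_ne hj.2]

/-- Double centering annihilates `g(a) + h(b)` and fixes a doubly centered `u`. -/
theorem double_centering {F u : ℝ → ℝ → ℝ} {g h : ℝ → ℝ}
    (hu : Continuous fun z : ℝ × ℝ => u z.1 z.2) (hg : Continuous g) (hh : Continuous h)
    (hua : ∀ b ∈ Set.Icc (-1 : ℝ) 1, (1 / 2) * ∫ a in (-1 : ℝ)..1, u a b = 0)
    (hub : ∀ a ∈ Set.Icc (-1 : ℝ) 1, (1 / 2) * ∫ b in (-1 : ℝ)..1, u a b = 0)
    (hF : ∀ a ∈ Set.Icc (-1 : ℝ) 1, ∀ b ∈ Set.Icc (-1 : ℝ) 1, F a b = u a b + (g a + h b))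
    {a b : ℝ} (ha : a ∈ Set.Icc (-1 : ℝ) 1) (hb : b ∈ Set.Icc (-1 : ℝ) 1) :
    F a b - (1 / 2) * (∫ s in (-1 : ℝ)..1, F s b) - (1 / 2) * (∫ t in (-1 : ℝ)..1, F a t)
      + (1 / 4) * (∫ z in (Set.Icc (-1 : ℝ) 1 ×ˢ Set.Icc (-1 : ℝ) 1), F z.1 z.2) = u a b := by
  have c1 : ∀ b, Continuous fun a => u a b := fun b =>
    hu.comp (f := fun a : ℝ => (a, b)) (by fun_prop)
  have c2 : ∀ a, Continuous fun b => u a b := fun a =>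
    hu.comp (f := fun b : ℝ => (a, b)) (by fun_prop)
  have hI : Set.uIcc (-1 : ℝ) 1 = Set.Icc (-1) 1 := Set.uIcc_of_le (by norm_num)
  have e1 : ∫ s in (-1 : ℝ)..1, F s b = (∫ s in (-1 : ℝ)..1, g s) + 2 * h b := by
    rw [intervalIntegral.integral_congr (g := fun s => u s b + (g s + h b))
      fun s hs => hF s (hI ▸ hs) b hb]
    have := hua b hb
    rw [intervalIntegral.integral_add ((c1 b).intervalIntegrable _ _)
      (Continuous.intervalIntegrable (by fun_prop) _ _),
      intervalIntegral.integral_add (hg.intervalIntegrable _ _) (by simp),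
      intervalIntegral.integral_const, smul_eq_mul]
    linarith
  have e2 : ∀ a ∈ Set.Icc (-1 : ℝ) 1,
      ∫ t in (-1 : ℝ)..1, (u a t + (g a + h t)) = 2 * g a + ∫ t in (-1 : ℝ)..1, h t := by
    intro a ha
    have := hub a ha
    rw [intervalIntegral.integral_add ((c2 a).intervalIntegrable _ _)
      (Continuous.intervalIntegrable (by fun_prop) _ _),
      intervalIntegral.integral_add (by simp) (hh.intervalIntegrable _ _),
      intervalIntegral.integral_const, smul_eq_mul]
    linarith
  have e2' : ∫ t in (-1 : ℝ)..1, F a t = 2 * g a + ∫ t in (-1 : ℝ)..1, h t := by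
    rw [← e2 a ha]
    exact intervalIntegral.integral_congr fun t ht => hF a ha t (hI ▸ ht)
  have e3 : ∫ z in (Set.Icc (-1 : ℝ) 1 ×ˢ Set.Icc (-1 : ℝ) 1), F z.1 z.2
      = 2 * (∫ s in (-1 : ℝ)..1, g s) + 2 * ∫ t in (-1 : ℝ)..1, h t := by
    have hc : Continuous fun z : ℝ × ℝ => u z.1 z.2 + (g z.1 + h z.2) := by fun_prop
    rw [setIntegral_congr_fun (g := fun z : ℝ × ℝ => u z.1 z.2 + (g z.1 + h z.2))
      (measurableSet_Icc.prod measurableSet_Icc) fun z hz => hF z.1 hz.1 z.2 hz.2,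
      Measure.volume_eq_prod, setIntegral_prod _
        (hc.continuousOn.integrableOn_compact (isCompact_Icc.prod isCompact_Icc)),
      setIntegral_congr_fun (g := fun s => 2 * g s + ∫ t in (-1 : ℝ)..1, h t) measurableSet_Icc,
      integral_Icc_eq_integral_Ioc, ← intervalIntegral.integral_of_le (by norm_num),
      intervalIntegral.integral_add ((hg.const_mul 2).intervalIntegrable _ _) (by simp),
      intervalIntegral.integral_const, intervalIntegral.integral_const_mul, smul_eq_mul]
    · norm_num
    · intro s hs
      simp only
      rw [← e2 s hs, integral_Icc_eq_integral_Ioc, intervalIntegral.integral_of_le (by norm_num)]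
  rw [e1, e2', e3, hF a ha b hb]
  ring

/-- for a generalized sparse additive model with centered components
and `(l,l') ∈ S₂`, letting `F(x_l,x_{l'})` be the average of `f` over all the other
coordinates, the doubly centered ANOVA projection of `F` equals `φ_{(l,l')}`. -/
theorem stmt18 {d : ℕ} (hd : 2 ≤ d)
    (S₁ : Finset (Fin d)) (S₂ : Finset (Fin d × Fin d))
    (hS₂ : ∀ e ∈ S₂, e.1 < e.2)
    (hdisj : Disjoint S₁ (varsS S₂))
    (c : ℝ) (φ₁ : Fin d → ℝ → ℝ) (φ₂ : Fin d × Fin d → ℝ → ℝ → ℝ) (ψ : Fin d → ℝ → ℝ)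
    (hφ₁ : ∀ p, Continuous (φ₁ p))
    (hφ₂ : ∀ e, Continuous (fun z : ℝ × ℝ => φ₂ e z.1 z.2))
    (hψ : ∀ q, Continuous (ψ q))
    (f : (Fin d → ℝ) → ℝ)
    (hf : ∀ x, f x = c + (∑ p ∈ S₁, φ₁ p (x p)) + (∑ e ∈ S₂, φ₂ e (x e.1) (x e.2))
        + ∑ q ∈ (varsS S₂).filter (fun q => 1 < degS S₂ q), ψ q (x q))
    (hcent₁ : ∀ p ∈ S₁, (1 / 2) * ∫ s in (-1 : ℝ)..1, φ₁ p s = 0)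
    (hcent₂a : ∀ e ∈ S₂, ∀ b ∈ Set.Icc (-1 : ℝ) 1,
        (1 / 2) * ∫ a in (-1 : ℝ)..1, φ₂ e a b = 0)
    (hcent₂b : ∀ e ∈ S₂, ∀ a ∈ Set.Icc (-1 : ℝ) 1,
        (1 / 2) * ∫ b in (-1 : ℝ)..1, φ₂ e a b = 0)
    (hcentψ : ∀ q ∈ (varsS S₂).filter (fun q => 1 < degS S₂ q),
        (1 / 2) * ∫ s in (-1 : ℝ)..1, ψ q s = 0)
    (l l' : Fin d) (hll' : (l, l') ∈ S₂)
    (F : ℝ → ℝ → ℝ)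
    (hF : ∀ a b : ℝ, F a b =
        ∫ y, f (Function.update (Function.update y l a) l' b)
          ∂(Measure.pi fun _ : Fin d => unifMeas)) :
    ∀ a ∈ Set.Icc (-1 : ℝ) 1, ∀ b ∈ Set.Icc (-1 : ℝ) 1,
      F a b - (1 / 2) * (∫ s in (-1 : ℝ)..1, F s b)
          - (1 / 2) * (∫ t in (-1 : ℝ)..1, F a t)
          + (1 / 4) * (∫ z in (Set.Icc (-1 : ℝ) 1 ×ˢ Set.Icc (-1 : ℝ) 1), F z.1 z.2)
        = φ₂ (l, l') a b := by
  have hlt : l < l' := hS₂ _ hll'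
  obtain ⟨R, ⟨cR, g, h, hg, hh, hR⟩, hfR⟩ : ∃ R : (Fin d → ℝ) → ℝ,
      IsAvgSum l l' R ∧ ∀ x, f x = φ₂ (l, l') (x l) (x l') + R x := by
    refine ⟨fun x => c + (∑ p ∈ S₁, φ₁ p (x p)) + (∑ e ∈ S₂.erase (l, l'), φ₂ e (x e.1) (x e.2))
        + ∑ q ∈ (varsS S₂).filter (fun q => 1 < degS S₂ q), ψ q (x q),
      (((IsAvgSum.const l l' c).add (IsAvgSum.sum _ fun p _ => ?_)).add
        (IsAvgSum.sum _ fun e he => ?_)).add (IsAvgSum.sum _ fun q _ => ?_), fun x => ?_⟩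
    · exact IsAvgSum.univariate hlt.ne (hφ₁ p) p
    · have he' := mem_of_mem_erase he
      exact IsAvgSum.bivariate hlt (hφ₂ e) (hcent₂a e he') (hcent₂b e he') (hS₂ e he')
        (ne_of_mem_erase he)
    · exact IsAvgSum.univariate hlt.ne (hψ q) q
    · rw [hf, ← Finset.add_sum_erase _ _ hll']
      ring
  intro a ha b hb
  refine double_centering (hφ₂ (l, l')) hg hh (hcent₂a _ hll') (hcent₂b _ hll') ?_ ha hb
  intro a ha b hb
  simp only [hF, hfR, Function.update_self, Function.update_of_ne hlt.ne]
  rw [integral_add (integrable_const _) (integrable_update cR l l' a b), hR a ha b hb]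
  simp
end
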